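/- The kernel of M̃ is exactly the two-dimensional subspace spanned by v₁ = (1,1,0,0) and v₂ = (−1,1,1,1); in particular, the eigenvalue 0 of M̃ has geometric multiplicity 2, so M̃ has no generalised eigenvector for the eigenvalue 0. -/

import Mathlib

/-- The kernel of `M̃` is exactly the two-dimensional subspace spanned by
`v₁ = (1,1,0,0)` and `v₂ = (−1,1,1,1)`; in particular the eigenvalue `0` of `M̃`
has geometric multiplicity `2`, and `M̃` has no generalised eigenvector for the
eigenvalue `0` (every `v` with `M̃² v = 0` already satisfies `M̃ v = 0`). -/
theorem kernel_of_Mt :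
    let Mt : Matrix (Fin 4) (Fin 4) ℝ :=
      !![0, 0, 1, -1;
         0, 0, -1, 1;
         1/6, -1/6, -1/6, 1/2;
         -1/6, 1/6, -1/2, 1/6]
    let v₁ : Fin 4 → ℝ := ![1, 1, 0, 0]
    let v₂ : Fin 4 → ℝ := ![-1, 1, 1, 1]
    (∀ v : Fin 4 → ℝ, Mt.mulVec v = 0 ↔ ∃ c d : ℝ, v = c • v₁ + d • v₂) ∧
    Module.finrank ℝ (LinearMap.ker Mt.mulVecLin) = 2 ∧
    (∀ v : Fin 4 → ℝ, Mt.mulVec (Mt.mulVec v) = 0 → Mt.mulVec v = 0) := by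
  intro Mt v₁ v₂
  have mem_ker (v : Fin 4 → ℝ) : Mt.mulVec v = 0 ↔ v 2 = v 3 ∧ v 1 - v 0 = 2 * v 3 := by
    simp only [Mt, funext_iff, Fin.forall_fin_succ, Matrix.mulVec, dotProduct, Fin.sum_univ_four]
    simp
    constructor
    · rintro ⟨h₀, -, h₂, -⟩
      constructor <;> linarith
    · rintro ⟨h₀, h₁⟩
      refine ⟨?_, ?_, ?_, ?_⟩ <;> linarith
  have ker_eq (v : Fin 4 → ℝ) : Mt.mulVec v = 0 ↔ ∃ c d : ℝ, v = c • v₁ + d • v₂ := by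
    rw [mem_ker]
    constructor
    · rintro ⟨h₀, h₁⟩
      refine ⟨v 0 + v 3, v 3, ?_⟩
      ext i
      fin_cases i <;> simp [v₁, v₂] <;> linarith
    · rintro ⟨c, d, rfl⟩
      simp [v₁, v₂]
      ring
  refine ⟨ker_eq, ?_, ?_⟩
  · have span_eq : LinearMap.ker Mt.mulVecLin = Submodule.span ℝ (Set.range ![v₁, v₂]) := by
      ext v
      rw [LinearMap.mem_ker, Matrix.mulVecLin_apply, ker_eq, Matrix.range_cons_cons_empty,
        Submodule.mem_span_pair]
      simp only [eq_comm]
    have indep : LinearIndependent ℝ ![v₁, v₂] := by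
      rw [LinearIndependent.pair_iff]
      intro c d h
      have h₀ := congrFun h 0
      have h₂ := congrFun h 2
      simp [v₁, v₂] at h₀ h₂
      constructor <;> linarith
    rw [span_eq, finrank_span_eq_card indep, Fintype.card_fin]
  · intro v h
    rw [mem_ker] at h ⊢
    obtain ⟨h₀, h₁⟩ := h
    simp [Mt, Matrix.mulVec, dotProduct, Fin.sum_univ_four] at h₀ h₁
    constructor <;> linarith
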